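/- arXiv:2307.07809 — 2 statements merged into one kernel-verified Lean document; each statement's English description precedes it below -/
import Mathlib

section
/- Let m and ℓ be positive integers and let k be a nonzero integer. If m divides kℓ, then Δ^k is central in G(m,ℓ), i.e. its centralizer is all of G(m,ℓ). If m does not divide kℓ, then the centralizer of Δ^k in G(m,ℓ) is exactly the set of integer powers of Δ. -/
/-- The word `a_i a_{i+1} ⋯ a_{i+p-1}` (indices mod `m`) in the free group on `ZMod m`. -/
def circWord (m : ℕ) (i : ZMod m) (p : ℕ) : FreeGroup (ZMod m) :=
  ((List.range p).map (fun k => FreeGroup.of (i + (k : ZMod m)))).prod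

/-- The defining relations of the circular group `G(m,ℓ)`. -/
def circRels (m ℓ : ℕ) : Set (FreeGroup (ZMod m)) :=
  { r | ∃ i : ZMod m, r = circWord m i ℓ * (circWord m (i + 1) ℓ)⁻¹ }

/-- The circular group `G(m,ℓ)`. -/
abbrev CircularGroup (m ℓ : ℕ) := PresentedGroup (circRels m ℓ)

/-- The generator `a_i` of the circular group `G(m,ℓ)`. -/
def circGen (m ℓ : ℕ) (i : ZMod m) : CircularGroup m ℓ :=
  PresentedGroup.of i

/-- The element `s(i,p) = a_i a_{i+1} ⋯ a_{i+p-1}` of the circular group `G(m,ℓ)`. -/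
def circS (m ℓ : ℕ) (i : ZMod m) (p : ℕ) : CircularGroup m ℓ :=
  ((List.range p).map (fun k => circGen m ℓ (i + (k : ZMod m)))).prod

/-- The Garside element `Δ = s(0,ℓ)` of the circular group `G(m,ℓ)`. -/
def circDelta (m ℓ : ℕ) : CircularGroup m ℓ := circS m ℓ 0 ℓ

/-!
Conjugation by `Δ` shifts the generators, `a_i Δ = Δ a_{i+ℓ}`, so `Δ ^ n` is central, where `n` is
the order of `ℓ` in `ℤ/m`. Modulo `Δ ^ n` one can choose on each orbit of the shift by `ℓ` a
coordinate `e` with values in `ℤ/n`; replacing `a_i` by `c_i = Δ ^ e(i) * a_i * Δ ^ (-e(i+1))` turns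
the relations `s(i,ℓ) = Δ` into `c_i ⋯ c_{i+ℓ-1} = 1`, in which `Δ` no longer occurs. Hence
`G(m,ℓ) / ⟨Δ ^ n⟩` is the free product of `ℤ/n`, generated by `Δ`, and the group generated by the
`c_i`. In a free product, whatever commutes with a nontrivial element of a factor lies in that
factor.
-/

section FreeProduct

open Monoid CoprodI

section Words

variable {ι : Type*} {M : ι → Type*} {j : ι}

open scoped Classical in
theorem fstIdx_of_smul_empty_ne [∀ i, Monoid (M i)] (z : M j) {i : ι} (hij : i ≠ j) :
    (of z • (Word.empty : Word M)).fstIdx ≠ some i := by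
  by_cases hz : z = 1
  · simp [hz, Word.fstIdx, Word.empty]
  · have hempty : (Word.empty : Word M).fstIdx ≠ some j := by simp [Word.fstIdx, Word.empty]
    rw [← Word.cons_eq_smul (h1 := hempty) (h2 := hz), Word.fstIdx_cons]
    simpa using hij.symm

-- The conclusion does not say that the first index is unchanged, because `z` may cancel the only
-- letter of `w`.
open scoped Classical in
theorem fstIdx_prod_mul_of_smul_empty_ne [∀ i, Monoid (M i)] (z : M j) (w : Word M) {i : ι}
    (hi : w.fstIdx ≠ some i) (hw : i ≠ j ∨ w ≠ Word.empty) :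
    ((w.prod * of z) • (Word.empty : Word M)).fstIdx ≠ some i := by
  induction w using Word.consRecOn generalizing i with
  | empty =>
    rw [Word.prod_empty, one_mul]
    exact fstIdx_of_smul_empty_ne z (hw.resolve_right (· rfl))
  | cons l y v hv hy ih =>
    rw [Word.fstIdx_cons] at hi
    rw [Word.prod_cons, mul_assoc]
    by_cases hlv : l ≠ j ∨ v ≠ Word.empty
    · rwa [mul_smul, ← Word.cons_eq_smul (h1 := ih hv hlv) (h2 := hy), Word.fstIdx_cons]
    · push Not at hlv
      obtain ⟨rfl, rfl⟩ := hlv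
      rw [Word.prod_empty, one_mul, ← map_mul]
      exact fstIdx_of_smul_empty_ne _ fun h => hi (h ▸ rfl)

theorem exists_eq_of_mul_prod [∀ i, Group (M i)] (j : ι) (g : CoprodI M) :
    ∃ (x : M j) (w : Word M), w.fstIdx ≠ some j ∧ g = of x * w.prod := by
  classical
  let p := Word.equivPair j (Word.equiv g)
  refine ⟨p.head, p.tail, p.fstIdx_ne, ?_⟩
  rw [← Word.prod_rcons, ← Word.equivPair_symm, Equiv.symm_apply_apply]
  exact (Word.equiv.symm_apply_apply g).symm

theorem prod_mul_of_ne_of_mul_prod [∀ i, Monoid (M i)] (z : M j) {y : M j} (hy : y ≠ 1)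
    {w : Word M} (hw : w.fstIdx ≠ some j) (hne : w ≠ Word.empty) :
    w.prod * of z ≠ of y * w.prod := by
  classical
  intro h
  apply fstIdx_prod_mul_of_smul_empty_ne z w hw (.inr hne)
  have hprod : w.prod • (Word.empty : Word M) = w := Word.equiv.apply_symm_apply w
  rw [h, mul_smul, hprod, ← Word.cons_eq_smul (h1 := hw) (h2 := hy), Word.fstIdx_cons]

theorem mem_range_of_of_mul_eq_mul [∀ i, Group (M i)] {y z : M j} (hy : y ≠ 1) {g : CoprodI M}
    (h : g * of z = of y * g) : g ∈ (of : M j →* CoprodI M).range := by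
  classical
  obtain ⟨x, w, hw, rfl⟩ := exists_eq_of_mul_prod j g
  by_cases hempty : w = Word.empty
  · exact ⟨x, by rw [hempty, Word.prod_empty, mul_one]⟩
  have hconj : x⁻¹ * y * x ≠ 1 := by
    simpa using (conj_eq_one_iff (a := x⁻¹) (b := y)).not.mpr hy
  refine absurd ?_ (prod_mul_of_ne_of_mul_prod z hconj hw hempty)
  rw [mul_assoc, ← eq_inv_mul_iff_mul_eq] at h
  rw [h]
  simp only [map_mul, map_inv, mul_assoc]

end Words

universe u

variable {G H : Type u}

/-- The pair `G`, `H` as a family indexed by `Bool`, through which the reduced words of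
`Monoid.CoprodI` become available for `Monoid.Coprod G H`. -/
def coprodFamily (G H : Type u) : Bool → Type u
  | true => G
  | false => H

instance [Group G] [Group H] : ∀ b, Group (coprodFamily G H b)
  | true => inferInstanceAs (Group G)
  | false => inferInstanceAs (Group H)

/-- The canonical map from the binary free product to the free product of the associated family. -/
def coprodToCoprodI (G H : Type u) [Group G] [Group H] :
    Coprod G H →* CoprodI (coprodFamily G H) :=
  Coprod.lift (of (M := coprodFamily G H) (i := true)) (of (M := coprodFamily G H) (i := false))

/-- The inverse of `coprodToCoprodI`, used to transport results back to `Monoid.Coprod G H`. -/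
def coprodIToCoprod (G H : Type u) [Group G] [Group H] :
    CoprodI (coprodFamily G H) →* Coprod G H :=
  CoprodI.lift fun
    | true => (Coprod.inl : G →* Coprod G H)
    | false => (Coprod.inr : H →* Coprod G H)

theorem coprodIToCoprod_comp_coprodToCoprodI [Group G] [Group H] :
    (coprodIToCoprod G H).comp (coprodToCoprodI G H) = MonoidHom.id _ :=
  Coprod.hom_ext (MonoidHom.ext fun _ => CoprodI.lift_of _ _)
    (MonoidHom.ext fun _ => CoprodI.lift_of _ _)

theorem coprodToCoprodI_inl [Group G] [Group H] (x : G) :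
    coprodToCoprodI G H (Coprod.inl x) = of (M := coprodFamily G H) (i := true) x :=
  Coprod.lift_apply_inl _ _ _

theorem coprodIToCoprod_of_true [Group G] [Group H] (x : G) :
    coprodIToCoprod G H (of (M := coprodFamily G H) (i := true) x) = Coprod.inl x :=
  CoprodI.lift_of _ _

theorem mem_range_inl_of_mul_eq_mul [Group G] [Group H] {y z : G} (hy : y ≠ 1)
    {g : Coprod G H} (h : g * Coprod.inl z = Coprod.inl y * g) :
    g ∈ (Coprod.inl : G →* Coprod G H).range := by
  have himage := congrArg (coprodToCoprodI G H) h
  rw [map_mul, map_mul, coprodToCoprodI_inl, coprodToCoprodI_inl] at himage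
  obtain ⟨x, hx⟩ : ∃ x : G, of (M := coprodFamily G H) (i := true) x = coprodToCoprodI G H g :=
    mem_range_of_of_mul_eq_mul hy himage
  refine ⟨x, ?_⟩
  rw [← coprodIToCoprod_of_true, hx, ← MonoidHom.comp_apply,
    coprodIToCoprod_comp_coprodToCoprodI, MonoidHom.id_apply]

end FreeProduct

section CyclicProduct

variable {A M N K : Type*} [AddMonoidWithOne A] [Monoid M] [Monoid N] [Group K]

/-- The product `c i * c (i + 1) * ⋯ * c (i + p - 1)` of a family indexed by, typically, `ZMod m`;
both the words `circWord` and the elements `s(i,p)` are of this form. -/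
def cyclicProd (c : A → M) (i : A) (p : ℕ) : M :=
  ((List.range p).map fun k : ℕ => c (i + k)).prod

theorem cyclicProd_succ (c : A → M) (i : A) (p : ℕ) :
    cyclicProd c i (p + 1) = cyclicProd c i p * c (i + p) :=
  List.prod_range_succ _ p

theorem cyclicProd_succ' (c : A → M) (i : A) (p : ℕ) :
    cyclicProd c i (p + 1) = c i * cyclicProd c (i + 1) p := by
  have hshift (k : ℕ) : i + ((k + 1 : ℕ) : A) = i + 1 + k := by
    rw [add_comm k, Nat.cast_add, Nat.cast_one, add_assoc]
  simp only [cyclicProd, List.prod_range_succ', hshift, Nat.cast_zero, add_zero]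

theorem map_cyclicProd (f : M →* N) (c : A → M) (i : A) (p : ℕ) :
    f (cyclicProd c i p) = cyclicProd (f ∘ c) i p := by
  simp [cyclicProd, map_list_prod, Function.comp_def]

/-- The family `c` changed by the coboundary of `h`; cyclic products of the twisted family
telescope to twisted cyclic products. -/
def coboundaryTwist (h c : A → K) (i : A) : K :=
  h i * c i * (h (i + 1))⁻¹

theorem cyclicProd_coboundaryTwist (h c : A → K) (i : A) (p : ℕ) :
    cyclicProd (coboundaryTwist h c) i p = h i * cyclicProd c i p * (h (i + p))⁻¹ := by
  induction p with
  | zero => simp [cyclicProd]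
  | succ p ih =>
    rw [cyclicProd_succ, cyclicProd_succ, ih, coboundaryTwist, Nat.cast_succ, ← add_assoc]
    group

theorem coboundaryTwist_inv_coboundaryTwist (h c : A → K) :
    coboundaryTwist h⁻¹ (coboundaryTwist h c) = c := by
  funext i
  simp [coboundaryTwist, mul_assoc]

theorem map_coboundaryTwist {L : Type*} [Group L] (f : K →* L) (h c : A → K) :
    f ∘ coboundaryTwist h c = coboundaryTwist (f ∘ h) (f ∘ c) := by
  funext i
  simp [coboundaryTwist]

end CyclicProduct

section OrbitCoordinate

variable {A : Type*} [AddGroup A]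

theorem exists_add_self_eq_add_one (a : A) :
    ∃ e : A → ZMod (addOrderOf a), ∀ i, e (i + a) = e i + 1 := by
  let base (i : A) : A := (QuotientAddGroup.mk i : A ⧸ AddSubgroup.zmultiples a).out
  have exists_zsmul (i : A) : ∃ e : ℤ, e • a = -base i + i :=
    AddSubgroup.mem_zmultiples_iff.mp (QuotientAddGroup.eq.mp (Quotient.out_eq _))
  have base_add (i : A) : base (i + a) = base i :=
    congrArg Quotient.out (QuotientAddGroup.mk_add_of_mem i (AddSubgroup.mem_zmultiples a))
  choose e he using exists_zsmul
  refine ⟨fun i => (e i : ZMod (addOrderOf a)), fun i => ?_⟩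
  rw [← Int.cast_one, ← Int.cast_add, ZMod.intCast_eq_intCast_iff, ← zsmul_eq_zsmul_iff_modEq,
    he, base_add, add_zsmul, he, one_zsmul, add_assoc]

/-- A coordinate, with values in `ZMod (addOrderOf a)`, on each orbit of the translation by `a`:
translating by `a` increases it by one. The origins of the orbits are chosen arbitrarily. -/
noncomputable def orbitCoord (a : A) : A → ZMod (addOrderOf a) :=
  (exists_add_self_eq_add_one a).choose

theorem orbitCoord_add_self (a i : A) : orbitCoord a (i + a) = orbitCoord a i + 1 :=
  (exists_add_self_eq_add_one a).choose_spec i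

end OrbitCoordinate

section ZModLift

variable {K : Type*} [Group K] {n : ℕ} {x : K}

/-- The homomorphism from the cyclic group of order `n` (infinite if `n = 0`) that sends the
generator to an element `x` with `x ^ n = 1`. -/
def zmodPowersHom (hx : x ^ n = 1) : Multiplicative (ZMod n) →* K :=
  AddMonoidHom.toMultiplicativeLeft
    (ZMod.lift n ⟨zmultiplesHom (Additive K) (Additive.ofMul x), by simpa [← ofMul_pow] using hx⟩)

theorem zmodPowersHom_ofAdd_one (hx : x ^ n = 1) :
    zmodPowersHom hx (Multiplicative.ofAdd 1) = x := by
  rw [← Int.cast_one]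
  simp [zmodPowersHom, -Int.cast_one]

theorem ofAdd_one_zpow (n : ℕ) (k : ℤ) :
    Multiplicative.ofAdd (1 : ZMod n) ^ k = Multiplicative.ofAdd (k : ZMod n) := by
  rw [← ofAdd_zsmul, zsmul_one]

end ZModLift

section CircularGroup

variable {m ℓ : ℕ} {K : Type*} [Group K]

-- `circWord` and `circS` elaborate to a product over the list `List.range p` already cast to
-- `ZMod m`, so they are not definitionally a `cyclicProd`.
theorem circWord_eq_cyclicProd (m : ℕ) (i : ZMod m) (p : ℕ) :
    circWord m i p = cyclicProd FreeGroup.of i p := by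
  simp [circWord, cyclicProd, ← List.map_eq_flatMap, Function.comp_def]

theorem circS_eq_cyclicProd (m ℓ : ℕ) (i : ZMod m) (p : ℕ) :
    circS m ℓ i p = cyclicProd (circGen m ℓ) i p := by
  simp [circS, cyclicProd, ← List.map_eq_flatMap, Function.comp_def]

theorem map_circWord (f : FreeGroup (ZMod m) →* K) (i : ZMod m) (p : ℕ) :
    f (circWord m i p) = cyclicProd (f ∘ FreeGroup.of) i p := by
  rw [circWord_eq_cyclicProd, map_cyclicProd]

theorem lift_circWord (f : ZMod m → K) (i : ZMod m) (p : ℕ) :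
    FreeGroup.lift f (circWord m i p) = cyclicProd f i p := by
  rw [map_circWord]
  congr 1
  funext j
  exact FreeGroup.lift_apply_of

theorem cyclicProd_circGen (m ℓ : ℕ) (i : ZMod m) :
    cyclicProd (circGen m ℓ) i ℓ = circDelta m ℓ := by
  have hperiodic : Function.Periodic (fun j => cyclicProd (circGen m ℓ) j ℓ) 1 := fun j => by
    have hrel := PresentedGroup.mk_eq_mk_of_mul_inv_mem (rels := circRels m ℓ) ⟨j, rfl⟩
    rw [map_circWord, map_circWord] at hrel
    exact hrel.symm
  obtain ⟨r, rfl⟩ := ZMod.intCast_surjective i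
  rw [circDelta, circS_eq_cyclicProd]
  simpa using hperiodic.int_mul_eq r

theorem circGen_mul_circDelta (m ℓ : ℕ) (i : ZMod m) :
    circGen m ℓ i * circDelta m ℓ = circDelta m ℓ * circGen m ℓ (i + ℓ) := by
  rw [← cyclicProd_circGen m ℓ (i + 1), ← cyclicProd_succ', cyclicProd_succ, cyclicProd_circGen,
    cyclicProd_circGen]

theorem circGen_mul_circDelta_pow (m ℓ r : ℕ) (i : ZMod m) :
    circGen m ℓ i * circDelta m ℓ ^ r = circDelta m ℓ ^ r * circGen m ℓ (i + r • (ℓ : ZMod m)) := by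
  induction r with
  | zero => simp
  | succ r ih =>
    rw [pow_succ, ← mul_assoc, ih, mul_assoc, circGen_mul_circDelta, mul_assoc, succ_nsmul,
      add_assoc]

/-- The order `m / gcd(m,ℓ)` of the shift of the generators of `G(m,ℓ)` under conjugation
by `Δ`. -/
noncomputable abbrev circPeriod (m ℓ : ℕ) : ℕ := addOrderOf (ℓ : ZMod m)

theorem circPeriod_dvd_iff {k : ℤ} : (circPeriod m ℓ : ℤ) ∣ k ↔ (m : ℤ) ∣ k * ℓ := by
  rw [addOrderOf_dvd_iff_zsmul_eq_zero, ← ZMod.intCast_zmod_eq_zero_iff_dvd]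
  simp

theorem circDelta_pow_circPeriod_mem_center (m ℓ : ℕ) :
    circDelta m ℓ ^ circPeriod m ℓ ∈ Subgroup.center (CircularGroup m ℓ) := by
  refine Subgroup.mem_center_iff.mpr fun g => Subgroup.mem_centralizer_singleton_iff.mp
    (PresentedGroup.generated_by _ (Subgroup.centralizer {_}) (fun i => ?_) g)
  have hcomm := circGen_mul_circDelta_pow m ℓ (circPeriod m ℓ) i
  rw [addOrderOf_nsmul_eq_zero, add_zero] at hcomm
  exact Subgroup.mem_centralizer_singleton_iff.mpr hcomm

theorem circDelta_zpow_mem_center {k : ℤ} (hk : (circPeriod m ℓ : ℤ) ∣ k) :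
    circDelta m ℓ ^ k ∈ Subgroup.center (CircularGroup m ℓ) := by
  obtain ⟨q, rfl⟩ := hk
  rw [zpow_mul, zpow_natCast]
  exact zpow_mem (circDelta_pow_circPeriod_mem_center m ℓ) q

/-- The central subgroup `⟨Δ ^ n⟩` of `G(m,ℓ)`, where `n` is `circPeriod m ℓ`. -/
noncomputable def circCentral (m ℓ : ℕ) : Subgroup (CircularGroup m ℓ) :=
  Subgroup.zpowers (circDelta m ℓ ^ circPeriod m ℓ)

theorem circCentral_le_center (m ℓ : ℕ) : circCentral m ℓ ≤ Subgroup.center _ :=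
  Subgroup.zpowers_le.mpr (circDelta_pow_circPeriod_mem_center m ℓ)

theorem circCentral_le_zpowers_circDelta (m ℓ : ℕ) :
    circCentral m ℓ ≤ Subgroup.zpowers (circDelta m ℓ) :=
  Subgroup.zpowers_le.mpr (pow_mem (Subgroup.mem_zpowers _) _)

instance (m ℓ : ℕ) : (circCentral m ℓ).Normal where
  conj_mem z hz g := by
    rwa [Subgroup.mem_center_iff.mp (circCentral_le_center m ℓ hz) g, mul_inv_cancel_right]

/-- The group generated by `c_i`, `i ∈ ZMod m`, in which every cyclic product of `ℓ` consecutive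
generators is trivial. It is the complementary factor of `⟨Δ⟩` in `G(m,ℓ)` modulo
`circCentral m ℓ`. -/
abbrev CyclicProductGroup (m ℓ : ℕ) :=
  PresentedGroup (Set.range fun i : ZMod m => circWord m i ℓ)

theorem cyclicProd_cyclicProductGroup_of (m ℓ : ℕ) (i : ZMod m) :
    cyclicProd (PresentedGroup.of : ZMod m → CyclicProductGroup m ℓ) i ℓ = 1 :=
  (map_circWord (PresentedGroup.mk _) i ℓ).symm.trans (PresentedGroup.one_of_mem ⟨i, rfl⟩)

end CircularGroup

section FreeProductDecomposition

open Monoid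

variable (m ℓ : ℕ)

/-- The power of `Δ` by which the generators are twisted, as an element of the cyclic group of
order `circPeriod m ℓ`. -/
noncomputable def circPhase (i : ZMod m) : Multiplicative (ZMod (circPeriod m ℓ)) :=
  Multiplicative.ofAdd (orbitCoord (ℓ : ZMod m) i)

theorem circPhase_add (i : ZMod m) :
    circPhase m ℓ (i + ℓ) = circPhase m ℓ i * Multiplicative.ofAdd 1 := by
  rw [circPhase, orbitCoord_add_self, ofAdd_add, circPhase]

/-- The free product that `G(m,ℓ)` becomes modulo `circCentral m ℓ`. -/
abbrev CircCoprod :=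
  Coprod (Multiplicative (ZMod (circPeriod m ℓ))) (CyclicProductGroup m ℓ)

/-- The images in the free product of the generators of `G(m,ℓ)`. -/
noncomputable def circCoprodGen : ZMod m → CircCoprod m ℓ :=
  coboundaryTwist (Coprod.inl ∘ circPhase m ℓ)⁻¹ (Coprod.inr ∘ PresentedGroup.of)

theorem cyclicProd_circCoprodGen (i : ZMod m) :
    cyclicProd (circCoprodGen m ℓ) i ℓ = Coprod.inl (Multiplicative.ofAdd 1) := by
  rw [circCoprodGen, cyclicProd_coboundaryTwist, ← map_cyclicProd,
    cyclicProd_cyclicProductGroup_of]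
  simp [circPhase_add]

/-- The homomorphism from `G(m,ℓ)` to the free product, whose kernel lies in `circCentral m ℓ`. -/
noncomputable def circToCoprod : CircularGroup m ℓ →* CircCoprod m ℓ :=
  PresentedGroup.toGroup (f := circCoprodGen m ℓ) <| by
    rintro _ ⟨i, rfl⟩
    rw [map_mul, map_inv, lift_circWord, lift_circWord, cyclicProd_circCoprodGen,
      cyclicProd_circCoprodGen, mul_inv_cancel]

theorem circToCoprod_comp_circGen : circToCoprod m ℓ ∘ circGen m ℓ = circCoprodGen m ℓ :=
  funext fun _ => PresentedGroup.toGroup.of _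

theorem circToCoprod_circDelta :
    circToCoprod m ℓ (circDelta m ℓ) = Coprod.inl (Multiplicative.ofAdd 1) := by
  rw [← cyclicProd_circGen m ℓ 0, map_cyclicProd, circToCoprod_comp_circGen,
    cyclicProd_circCoprodGen]

/-- `G(m,ℓ)` modulo its central subgroup `⟨Δ ^ n⟩`. -/
abbrev CircQuotient := CircularGroup m ℓ ⧸ circCentral m ℓ

theorem mk'_circDelta_pow_circPeriod :
    QuotientGroup.mk' (circCentral m ℓ) (circDelta m ℓ) ^ circPeriod m ℓ = 1 := by
  rw [← map_pow]
  exact (QuotientGroup.eq_one_iff _).mpr (Subgroup.mem_zpowers _)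

/-- The homomorphism identifying the cyclic factor with the powers of the image of `Δ`. -/
noncomputable def circDeltaHom : Multiplicative (ZMod (circPeriod m ℓ)) →* CircQuotient m ℓ :=
  zmodPowersHom (mk'_circDelta_pow_circPeriod m ℓ)

/-- The images in `CircQuotient m ℓ` of the generators of `CyclicProductGroup m ℓ`. -/
noncomputable def circQuotientGen : ZMod m → CircQuotient m ℓ :=
  coboundaryTwist (circDeltaHom m ℓ ∘ circPhase m ℓ)
    (QuotientGroup.mk' (circCentral m ℓ) ∘ circGen m ℓ)

theorem cyclicProd_circQuotientGen (i : ZMod m) : cyclicProd (circQuotientGen m ℓ) i ℓ = 1 := by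
  rw [circQuotientGen, cyclicProd_coboundaryTwist, ← map_cyclicProd, cyclicProd_circGen]
  simp only [Function.comp_apply, circPhase_add, map_mul]
  rw [circDeltaHom, zmodPowersHom_ofAdd_one, mul_inv_cancel]

/-- The homomorphism from the complementary factor to `CircQuotient m ℓ`. -/
noncomputable def cyclicProductGroupToQuotient : CyclicProductGroup m ℓ →* CircQuotient m ℓ :=
  PresentedGroup.toGroup (f := circQuotientGen m ℓ) <| by
    rintro _ ⟨i, rfl⟩
    rw [lift_circWord, cyclicProd_circQuotientGen]

/-- The homomorphism from the free product to `CircQuotient m ℓ` left inverse to the one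
induced by `circToCoprod m ℓ`. -/
noncomputable def circCoprodToQuotient : CircCoprod m ℓ →* CircQuotient m ℓ :=
  Coprod.lift (circDeltaHom m ℓ) (cyclicProductGroupToQuotient m ℓ)

theorem circCoprodToQuotient_comp_circToCoprod :
    (circCoprodToQuotient m ℓ).comp (circToCoprod m ℓ) = QuotientGroup.mk' (circCentral m ℓ) := by
  have hinl : circCoprodToQuotient m ℓ ∘ (Coprod.inl ∘ circPhase m ℓ)⁻¹ =
      (circDeltaHom m ℓ ∘ circPhase m ℓ)⁻¹ := by
    funext i
    simp [circCoprodToQuotient]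
  have hinr : circCoprodToQuotient m ℓ ∘ Coprod.inr ∘ PresentedGroup.of = circQuotientGen m ℓ := by
    funext i
    simp [circCoprodToQuotient, cyclicProductGroupToQuotient]
  have hgen : circCoprodToQuotient m ℓ ∘ circToCoprod m ℓ ∘ circGen m ℓ =
      QuotientGroup.mk' (circCentral m ℓ) ∘ circGen m ℓ := by
    rw [circToCoprod_comp_circGen, circCoprodGen, map_coboundaryTwist, hinl, hinr, circQuotientGen,
      coboundaryTwist_inv_coboundaryTwist]
  exact PresentedGroup.ext (congrFun hgen)

theorem ker_circToCoprod_le : (circToCoprod m ℓ).ker ≤ circCentral m ℓ := by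
  rw [← QuotientGroup.ker_mk' (circCentral m ℓ), ← circCoprodToQuotient_comp_circToCoprod]
  intro g hg
  rw [MonoidHom.mem_ker] at hg ⊢
  rw [MonoidHom.comp_apply, hg, map_one]

theorem comap_circToCoprod_range_inl_le :
    (Coprod.inl : _ →* CircCoprod m ℓ).range.comap (circToCoprod m ℓ) ≤
      Subgroup.zpowers (circDelta m ℓ) := by
  rintro g ⟨y, hy⟩
  obtain ⟨j, hj⟩ := ZMod.intCast_surjective y.toAdd
  have hpow : circToCoprod m ℓ g = circToCoprod m ℓ (circDelta m ℓ ^ j) := by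
    rw [map_zpow, circToCoprod_circDelta, ← map_zpow, ofAdd_one_zpow, hj, ofAdd_toAdd, hy]
  have hker : g * (circDelta m ℓ ^ j)⁻¹ ∈ (circToCoprod m ℓ).ker := by
    rw [MonoidHom.mem_ker, map_mul, map_inv, hpow, mul_inv_cancel]
  refine (Subgroup.mul_mem_cancel_right _ (inv_mem (Subgroup.zpow_mem_zpowers _ j))).mp ?_
  exact circCentral_le_zpowers_circDelta m ℓ (ker_circToCoprod_le m ℓ hker)

variable {m ℓ}

theorem mem_zpowers_circDelta_of_commute {k : ℤ} (hk : ¬ (circPeriod m ℓ : ℤ) ∣ k)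
    {g : CircularGroup m ℓ} (hg : Commute g (circDelta m ℓ ^ k)) :
    g ∈ Subgroup.zpowers (circDelta m ℓ) := by
  have hne : Multiplicative.ofAdd (1 : ZMod (circPeriod m ℓ)) ^ k ≠ 1 := by
    rwa [ofAdd_one_zpow, Ne, ofAdd_eq_one, ZMod.intCast_zmod_eq_zero_iff_dvd]
  have hcomm := hg.map (circToCoprod m ℓ)
  rw [map_zpow, circToCoprod_circDelta, ← map_zpow] at hcomm
  exact comap_circToCoprod_range_inl_le m ℓ (mem_range_inl_of_mul_eq_mul hne hcomm.eq)

theorem centralizer_circDelta_zpow {k : ℤ} (hk : ¬ (circPeriod m ℓ : ℤ) ∣ k) :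
    Subgroup.centralizer {circDelta m ℓ ^ k} = Subgroup.zpowers (circDelta m ℓ) := by
  refine le_antisymm (fun g hg => ?_) (Subgroup.zpowers_le.mpr ?_)
  · exact mem_zpowers_circDelta_of_commute hk (Subgroup.mem_centralizer_singleton_iff.mp hg)
  · exact Subgroup.mem_centralizer_singleton_iff.mpr (Commute.self_zpow _ k).eq

end FreeProductDecomposition

/-- If `m ∣ kℓ` then `Δ^k` is central in `G(m,ℓ)`; otherwise
the centralizer of `Δ^k` is exactly the set of integer powers of `Δ`. -/
theorem centralizer_delta_power (m ℓ : ℕ) (hm : 0 < m) (hℓ : 0 < ℓ) (k : ℤ) (hk : k ≠ 0) :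
    ((m : ℤ) ∣ k * ℓ → Subgroup.centralizer {(circDelta m ℓ) ^ k} = ⊤) ∧
    (¬ (m : ℤ) ∣ k * ℓ → Subgroup.centralizer {(circDelta m ℓ) ^ k} =
      Subgroup.zpowers (circDelta m ℓ)) := by
  rw [← circPeriod_dvd_iff]
  refine ⟨fun hk => ?_, centralizer_circDelta_zpow⟩
  rw [Subgroup.centralizer_eq_top_iff_subset, Set.singleton_subset_iff]
  exact circDelta_zpow_mem_center hk
end

section
/- Let m and ℓ be positive integers, let p be a nonzero integer and q an integer. If x, y ∈ G(m,ℓ) satisfy x^p = Δ^q and y^p = Δ^q, then x and y are conjugate in G(m,ℓ). -/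
/-!
Write `m = d * M` and `ℓ = d * L` with `M`, `L` coprime, and put `ε = s(0,m)`. Since
`m * L = ℓ * M`, we have `ε ^ L = Δ ^ M`, and this element is central. Conjugation by `Δ` shifts
the indices of the generators by `ℓ`, so for `R * L ≡ -1 [MOD M]` conjugation by `Δ ^ R` shifts
them by `d`. Thus `Δ` and `a_0, …, a_{d-1}` generate `G(m,ℓ)`, and `a_0` can be traded for `ε`:
this identifies `G(m,ℓ) ⧸ ⟨Δ ^ M⟩` with the free product of `ℤ/M`, generated by `Δ`, of `ℤ/L`,
generated by `ε`, and of a free group. The image of a periodic element in this quotient has finite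
order, so it is conjugate into a finite free factor. Hence a periodic element is conjugate to a
power of `Δ` or of `ε`. Such a power is determined by its image under the length homomorphism, and
roots of the same order of one element have the same length.
-/

open Monoid

theorem normal_of_le_center {G : Type*} [Group G] {H : Subgroup G} (h : H ≤ Subgroup.center G) :
    H.Normal :=
  ⟨fun z hz g => by rwa [Subgroup.mem_center_iff.1 (h hz) g, mul_inv_cancel_right]⟩

theorem exists_mem_isConj_mul_of_isConj_coe {G : Type*} [Group G] {N : Subgroup G} [N.Normal]
    {w x : G} (h : IsConj (w : G ⧸ N) x) : ∃ z ∈ N, IsConj (w * z) x := by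
  obtain ⟨c, hc⟩ := isConj_iff.1 h
  obtain ⟨g, rfl⟩ := QuotientGroup.mk_surjective c
  refine ⟨w⁻¹ * g⁻¹ * x * g, ?_, isConj_iff.2 ⟨g, by group⟩⟩
  rw [← QuotientGroup.eq_one_iff]
  simp only [QuotientGroup.mk_mul, QuotientGroup.mk_inv, ← hc]
  group

theorem zpow_eq_zpow_of_map_eq {G H : Type*} [Group G] [Group H] [IsMulTorsionFree H] (f : G →* H)
    {w : G} (hw : f w ≠ 1) {i j : ℤ} (hij : f (w ^ i) = f (w ^ j)) : w ^ i = w ^ j := by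
  rw [map_zpow, map_zpow] at hij
  rw [injective_zpow_iff_not_isOfFinOrder.2 (not_isOfFinOrder_of_isMulTorsionFree hw) hij]

theorem exists_eq_mul_coprime (m ℓ : ℕ) :
    ∃ d M L : ℕ, M.Coprime L ∧ m = d * M ∧ ℓ = d * L := by
  obtain ⟨M, L, hcop, hM, hL⟩ := Nat.exists_coprime m ℓ
  exact ⟨m.gcd ℓ, M, L, hcop, by rwa [mul_comm], by rwa [mul_comm]⟩

theorem exists_mul_add_one_eq_mul_of_coprime {M L : ℕ} (h : M.Coprime L) (hM : M ≠ 0) :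
    ∃ R u, R * L + 1 = u * M := by
  obtain ⟨R, hR⟩ : ∃ R : ℕ, (R : ZMod M) = -(L : ZMod M)⁻¹ :=
    have : NeZero M := ⟨hM⟩
    ZMod.natCast_zmod_surjective _
  have hdvd : ((R * L + 1 : ℕ) : ZMod M) = 0 := by
    push_cast
    rw [hR, neg_mul, mul_comm, ZMod.coe_mul_inv_eq_one L h.symm, neg_add_cancel]
  obtain ⟨u, hu⟩ := (ZMod.natCast_eq_zero_iff _ _).1 hdvd
  exact ⟨R, u, hu.trans (mul_comm M u)⟩

/-! ### Torsion in free products -/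

section FreeProduct

variable {ι : Type*} {G : ι → Type*} [∀ i, Group (G i)]

/-- An element of a free product whose reduced word has at least two letters and whose first and
last letters lie in different factors. -/
def IsCyclicallyReduced (x : CoprodI G) : Prop :=
  ∃ (i j : ι) (w : CoprodI.NeWord G i j), i ≠ j ∧ w.prod = x

theorem neWord_prod_ne_one {i j : ι} (w : CoprodI.NeWord G i j) : w.prod ≠ 1 := by
  classical
  intro h
  have hw : w.toWord = CoprodI.Word.empty :=
    CoprodI.Word.equiv.symm.injective (h.trans CoprodI.Word.prod_empty.symm)
  exact w.toList_ne_nil (congrArg CoprodI.Word.toList hw)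

theorem exists_neWord_prod_eq_pow {i j : ι} (hij : i ≠ j) (w : CoprodI.NeWord G i j) (n : ℕ) :
    ∃ w' : CoprodI.NeWord G i j, w'.prod = w.prod ^ (n + 1) := by
  induction n with
  | zero => exact ⟨w, (pow_one _).symm⟩
  | succ n ih =>
    obtain ⟨w', hw'⟩ := ih
    exact ⟨w'.append hij.symm w, by rw [CoprodI.NeWord.append_prod, hw', ← pow_succ]⟩

theorem IsCyclicallyReduced.pow_ne_one {x : CoprodI G} (hx : IsCyclicallyReduced x) {n : ℕ}
    (hn : n ≠ 0) : x ^ n ≠ 1 := by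
  obtain ⟨i, j, w, hij, rfl⟩ := hx
  obtain ⟨k, rfl⟩ := Nat.exists_eq_add_one_of_ne_zero hn
  obtain ⟨w', hw'⟩ := exists_neWord_prod_eq_pow hij w k
  exact hw' ▸ neWord_prod_ne_one w'

theorem isCyclicallyReduced_prod_of_ne {a b : Σ i, G i} {l : List (Σ i, G i)}
    (w : CoprodI.Word G) (hw : w.toList = a :: (l ++ [b])) (hab : a.1 ≠ b.1) :
    IsCyclicallyReduced w.prod := by
  obtain ⟨i, j, v, rfl⟩ := CoprodI.NeWord.of_word w (by rintro rfl; simp at hw)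
  change v.toList = _ at hw
  have hi := v.toList_head?
  have hj := v.toList_getLast?
  rw [hw, List.head?_cons, Option.some_inj] at hi
  rw [hw, ← List.cons_append, List.getLast?_concat, Option.some_inj] at hj
  subst hi hj
  exact ⟨_, _, v, hab, rfl⟩

theorem isCyclicallyReduced_of_mul_prod {i : ι} {g : G i} (hg : g ≠ 1) (w : CoprodI.Word G)
    {l : List (Σ i, G i)} {c : Σ i, G i} (hw : w.toList = l ++ [c]) (hfst : w.fstIdx ≠ some i)
    (hlast : i ≠ c.1) : IsCyclicallyReduced (CoprodI.of g * w.prod) := by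
  rw [← CoprodI.Word.prod_cons i g w hg hfst]
  exact isCyclicallyReduced_prod_of_ne (a := ⟨i, g⟩) _ (congrArg _ hw) hlast

theorem isConj_of_or_isCyclicallyReduced_prod [Nonempty ι] (w : CoprodI.Word G) :
    (∃ (i : ι) (g : G i), IsConj (CoprodI.of g) w.prod) ∨
      ∃ y, IsCyclicallyReduced y ∧ IsConj y w.prod := by
  obtain ⟨l, ne_one, chain⟩ := w
  induction l using List.bidirectionalRec with
  | nil => exact .inl ⟨Classical.arbitrary ι, 1, by simp [CoprodI.Word.prod]⟩
  | singleton a =>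
    have ha : CoprodI.of a.2 = CoprodI.Word.prod ⟨[a], ne_one, chain⟩ := by
      simp [CoprodI.Word.prod]
    exact .inl ⟨a.1, a.2, ha ▸ .refl _⟩
  | cons_append a l b ih =>
    by_cases hab : a.1 = b.1
    swap
    · exact .inr ⟨_, isCyclicallyReduced_prod_of_ne _ rfl hab, .refl _⟩
    obtain ⟨i, α⟩ := a
    obtain ⟨j, β⟩ := b
    obtain rfl : i = j := hab
    obtain ⟨hfst, chain_tail⟩ := List.isChain_cons.1 chain
    obtain ⟨chain_l, -, hlast⟩ := List.isChain_append.1 chain_tail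
    let w : CoprodI.Word G := ⟨l, fun c hc => ne_one c (by simp [hc]), chain_l⟩
    have rotate : IsConj (CoprodI.of (β * α) * w.prod)
        (CoprodI.Word.prod ⟨⟨i, α⟩ :: (l ++ [⟨i, β⟩]), ne_one, chain⟩) :=
      isConj_iff.2 ⟨(CoprodI.of β)⁻¹, by simp [w, CoprodI.Word.prod, mul_assoc]⟩
    by_cases hβα : β * α = 1
    · rw [hβα, map_one, one_mul] at rotate
      obtain ⟨k, g, hg⟩ | ⟨y, hy, hyw⟩ := ih w.ne_one w.chain_ne
      · exact .inl ⟨k, g, hg.trans rotate⟩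
      · exact .inr ⟨y, hy, hyw.trans rotate⟩
    obtain rfl | ⟨l, c, rfl⟩ := l.eq_nil_or_concat'
    · simp at chain
    have hfst_w : w.fstIdx ≠ some i := by
      rw [CoprodI.Word.fstIdx_ne_iff]
      exact fun c hc => hfst c (by rwa [List.head?_append_of_ne_nil _ (by simp)])
    have hlast_w : i ≠ c.1 := (hlast c (by simp) ⟨i, β⟩ rfl).symm
    exact .inr ⟨_, isCyclicallyReduced_of_mul_prod hβα w rfl hfst_w hlast_w, rotate⟩

theorem exists_isConj_of_of_pow_eq_one [Nonempty ι] {x : CoprodI G} {n : ℕ} (hn : n ≠ 0)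
    (hx : x ^ n = 1) : ∃ (i : ι) (g : G i), IsConj (CoprodI.of g) x := by
  classical
  obtain ⟨w, rfl⟩ := (CoprodI.Word.equiv (M := G)).symm.surjective x
  refine (isConj_of_or_isCyclicallyReduced_prod w).resolve_right ?_
  rintro ⟨y, hy, hyw⟩
  have hyn : IsConj (y ^ n) 1 := hx ▸ hyw.pow n
  exact hy.pow_ne_one hn (isConj_one_right.1 hyn.symm)

end FreeProduct

section CyclicFreeProduct

variable {ι : Type*}

/-- The free product of cyclic groups of orders `n i`, where `n i = 0` stands for an infinite
cyclic group. -/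
abbrev CyclicFreeProduct (n : ι → ℕ) : Type _ :=
  CoprodI fun i => Multiplicative (ZMod (n i))

variable {n : ι → ℕ}

/-- The generator of the `i`-th free factor. -/
def CyclicFreeProduct.gen (n : ι → ℕ) (i : ι) : CyclicFreeProduct n :=
  CoprodI.of (i := i) (Multiplicative.ofAdd 1)

theorem CyclicFreeProduct.gen_zpow (i : ι) (k : ℤ) :
    gen n i ^ k = CoprodI.of (i := i) (Multiplicative.ofAdd (k : ZMod (n i))) := by
  rw [gen, ← map_zpow, ← ofAdd_zsmul, zsmul_one]

theorem CyclicFreeProduct.gen_pow_order (i : ι) : gen n i ^ n i = 1 := by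
  rw [← zpow_natCast, gen_zpow, Int.cast_natCast, ZMod.natCast_self, ofAdd_zero, map_one]

theorem CyclicFreeProduct.exists_hom_gen {K : Type*} [Group K] (c : ι → K)
    (hc : ∀ i, c i ^ n i = 1) : ∃ φ : CyclicFreeProduct n →* K, ∀ i, φ (gen n i) = c i := by
  let factorHom (i : ι) : Multiplicative (ZMod (n i)) →* K :=
    AddMonoidHom.toMultiplicativeLeft (ZMod.lift (n i)
      ⟨zmultiplesHom (Additive K) (Additive.ofMul (c i)), by simp [← ofMul_pow, hc]⟩)
  have factorHom_ofAdd (i : ι) (k : ℤ) :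
      factorHom i (Multiplicative.ofAdd (k : ZMod (n i))) = c i ^ k := by
    simp [factorHom]
  refine ⟨CoprodI.lift factorHom, fun i => ?_⟩
  rw [gen, CoprodI.lift_of]
  simpa using factorHom_ofAdd i 1

theorem CyclicFreeProduct.exists_isConj_gen_zpow [Nonempty ι] {x : CyclicFreeProduct n} {k : ℕ}
    (hk : k ≠ 0) (hx : x ^ k = 1) (hx_ne : x ≠ 1) :
    ∃ (i : ι) (j : ℤ), n i ≠ 0 ∧ IsConj (gen n i ^ j) x := by
  obtain ⟨i, g, hg⟩ := exists_isConj_of_of_pow_eq_one hk hx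
  obtain ⟨j, rfl⟩ : ∃ j : ℤ, Multiplicative.ofAdd (j : ZMod (n i)) = g :=
    ZMod.intCast_surjective g.toAdd
  rw [← gen_zpow] at hg
  refine ⟨i, j, fun hi => hx_ne ?_, hg⟩
  have hpow : gen n i ^ (j * k) = 1 := by
    rw [zpow_mul, zpow_natCast, ← isConj_one_right, isConj_comm, ← hx]
    exact hg.pow k
  rw [gen_zpow, map_eq_one_iff _ (CoprodI.of_injective i), ofAdd_eq_one,
    ZMod.intCast_zmod_eq_zero_iff_dvd, hi, Nat.cast_zero, zero_dvd_iff] at hpow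
  obtain rfl : j = 0 := (mul_eq_zero.1 hpow).resolve_right (by exact_mod_cast hk)
  rwa [zpow_zero, isConj_one_right] at hg

end CyclicFreeProduct

/-! ### Products of consecutive terms -/

section ConsecutiveProd

variable {R K : Type*} [AddMonoidWithOne R]

/-- The product `f i * f (i + 1) * ⋯ * f (i + p - 1)`. -/
def consecutiveProd [Monoid K] (f : R → K) (i : R) (p : ℕ) : K :=
  ((List.range p).map fun k : ℕ => f (i + k)).prod

section Monoid

variable [Monoid K] {f : R → K}

theorem consecutiveProd_one (f : R → K) (i : R) : consecutiveProd f i 1 = f i := by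
  simp [consecutiveProd]

theorem consecutiveProd_add (f : R → K) (i : R) (p q : ℕ) :
    consecutiveProd f i (p + q) = consecutiveProd f i p * consecutiveProd f (i + p) q := by
  simp [consecutiveProd, List.range_add, Function.comp_def, add_assoc]

theorem consecutiveProd_mul_apply (f : R → K) (i : R) (p : ℕ) :
    consecutiveProd f i p * f (i + p) = f i * consecutiveProd f (i + 1) p := by
  rw [← consecutiveProd_one f (i + p), ← consecutiveProd_add, add_comm p, consecutiveProd_add,
    consecutiveProd_one, Nat.cast_one]

theorem consecutiveProd_congr {S : Type*} [AddMonoidWithOne S] {g : S → K} {i : R} {j : S} {p : ℕ}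
    (h : ∀ k < p, f (i + k) = g (j + k)) : consecutiveProd f i p = consecutiveProd g j p :=
  congrArg List.prod (List.map_congr_left fun k hk => h k (List.mem_range.1 hk))

theorem consecutiveProd_comp_natCast (f : R → K) (p : ℕ) :
    consecutiveProd (fun k : ℕ => f k) 0 p = consecutiveProd f 0 p :=
  consecutiveProd_congr fun k _ => by simp

theorem map_consecutiveProd {H F : Type*} [Monoid H] [FunLike F K H] [MonoidHomClass F K H]
    (φ : F) (f : R → K) (i : R) (p : ℕ) :
    φ (consecutiveProd f i p) = consecutiveProd (fun j => φ (f j)) i p := by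
  simp [consecutiveProd, map_list_prod, Function.comp_def]

theorem semiconjBy_consecutiveProd {E : K} {i j : R} {p : ℕ}
    (h : ∀ k < p, SemiconjBy E (f (i + k)) (f (j + k))) :
    SemiconjBy E (consecutiveProd f i p) (consecutiveProd f j p) := by
  induction p with
  | zero => exact SemiconjBy.one_right E
  | succ p ih =>
    simp only [consecutiveProd_add, consecutiveProd_one]
    exact (ih fun k hk => h k (hk.trans p.lt_succ_self)).mul_right (h p p.lt_succ_self)

theorem consecutiveProd_mul_eq_pow {D : K} {d : ℕ} (h : ∀ i, consecutiveProd f i d = D) (i : R)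
    (t : ℕ) : consecutiveProd f i (d * t) = D ^ t := by
  induction t with
  | zero => simp [consecutiveProd]
  | succ t ih => rw [mul_add_one, consecutiveProd_add, ih, h, pow_succ]

theorem semiconjBy_pow_of_shift {E : K} {d : ℕ} (h : ∀ i, SemiconjBy E (f i) (f (i + d)))
    (i : R) (t : ℕ) : SemiconjBy (E ^ t) (f i) (f (i + (d * t : ℕ))) := by
  induction t with
  | zero => simp
  | succ t ih =>
    rw [pow_succ', mul_add_one, Nat.cast_add, ← add_assoc]
    exact (h _).mul_left ih

theorem consecutiveProd_mul_mul_pow {E : K} {d : ℕ} (h : ∀ i, SemiconjBy E (f i) (f (i + d)))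
    (i : R) (t : ℕ) :
    consecutiveProd f i (d * t) * E ^ t = (consecutiveProd f i d * E) ^ t := by
  induction t with
  | zero => simp [consecutiveProd]
  | succ t ih =>
    have hblock : SemiconjBy (E ^ t) (consecutiveProd f i d)
        (consecutiveProd f (i + (d * t : ℕ)) d) :=
      semiconjBy_consecutiveProd fun k _ => by
        have hk := semiconjBy_pow_of_shift h (i + k) t
        rwa [add_assoc, ← Nat.cast_add, add_comm k, Nat.cast_add, ← add_assoc] at hk
    calc consecutiveProd f i (d * (t + 1)) * E ^ (t + 1)
      _ = consecutiveProd f i (d * t) * (consecutiveProd f (i + (d * t : ℕ)) d * E ^ t) * E := by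
        simp only [mul_add_one, consecutiveProd_add, pow_succ, mul_assoc]
      _ = consecutiveProd f i (d * t) * E ^ t * (consecutiveProd f i d * E) := by
        rw [← hblock.eq]; simp only [mul_assoc]
      _ = (consecutiveProd f i d * E) ^ (t + 1) := by rw [ih, pow_succ]

end Monoid

theorem consecutiveProd_eq_of_semiconjBy [LeftCancelMonoid K] {f : ℕ → K} {D : K} {l : ℕ}
    (h : ∀ n, SemiconjBy D (f (n + l)) (f n)) (h_zero : consecutiveProd f 0 l = D) (n : ℕ) :
    consecutiveProd f n l = D := by
  induction n with
  | zero => exact h_zero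
  | succ n ih =>
    have hn := consecutiveProd_mul_apply f n l
    rw [ih, Nat.cast_id, (h n).eq] at hn
    exact (mul_left_cancel hn).symm

theorem consecutiveProd_update_zero {K : Type*} [Group K] (a : ℕ → K) (B : K) {p : ℕ} (hp : 0 < p) :
    consecutiveProd (Function.update a 0 (B * (consecutiveProd a 1 (p - 1))⁻¹)) 0 p = B := by
  have htail : consecutiveProd (Function.update a 0 (B * (consecutiveProd a 1 (p - 1))⁻¹)) 1 (p - 1)
      = consecutiveProd a 1 (p - 1) :=
    consecutiveProd_congr fun k _ => Function.update_of_ne (by simp) _ _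
  nth_rw 2 [← Nat.add_sub_of_le hp]
  rw [consecutiveProd_add, consecutiveProd_one]
  simp [htail]

end ConsecutiveProd

section ConjSeq

variable {K : Type*} [Group K]

/-- The sequence that starts with `e 0, …, e (d - 1)` and is conjugated by `E` whenever the index
increases by `d`. -/
def conjSeq (d : ℕ) (E : K) (e : ℕ → K) (n : ℕ) : K :=
  MulAut.conj (E ^ (n / d)) (e (n % d))

variable {d : ℕ} {E : K} {e : ℕ → K}

theorem conjSeq_of_lt {n : ℕ} (hn : n < d) : conjSeq d E e n = e n := by
  simp [conjSeq, Nat.div_eq_of_lt hn, Nat.mod_eq_of_lt hn]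

theorem semiconjBy_conjSeq (hd : 0 < d) (n : ℕ) :
    SemiconjBy E (conjSeq d E e n) (conjSeq d E e (n + d)) := by
  simp [SemiconjBy, conjSeq, Nat.add_div_right _ hd, pow_succ', mul_assoc]

theorem map_conjSeq {H : Type*} [Group H] (φ : K →* H) (n : ℕ) :
    φ (conjSeq d E e n) = conjSeq d (φ E) (fun k => φ (e k)) n := by
  simp only [conjSeq, MulAut.conj_apply]
  simp only [map_mul, map_inv, map_pow]

theorem eq_conjSeq_of_semiconjBy {f : ℕ → K} (h : ∀ n, SemiconjBy E (f n) (f (n + d))) :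
    f = conjSeq d E f := by
  funext n
  have hn := semiconjBy_pow_of_shift h (n % d) (n / d)
  rw [Nat.cast_id, Nat.mod_add_div] at hn
  exact eq_mul_inv_of_mul_eq hn.eq.symm

variable {M L R u : ℕ} {C D : K}

theorem conjSeq_periodic (hd : 0 < d) (hE : E ^ M = 1) :
    Function.Periodic (conjSeq d E e) (d * M) := fun n => by
  have hn := semiconjBy_pow_of_shift (semiconjBy_conjSeq (E := E) (e := e) hd) n M
  rw [hE] at hn
  simpa using hn.eq.symm

theorem consecutiveProd_conjSeq (hd : 0 < d) (h : R * L + 1 = u * M) (hD : D ^ M = 1)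
    (hC : C ^ L = 1) (he : consecutiveProd e 0 d * D ^ R = C ^ u) (n : ℕ) :
    consecutiveProd (conjSeq d (D ^ R) e) n (d * L) = D := by
  have hconj := semiconjBy_conjSeq (E := D ^ R) (e := e) hd
  have hpow : (D ^ R) ^ L * D = 1 := by
    rw [← pow_mul, ← pow_succ, h, mul_comm, pow_mul, hD, one_pow]
  have hinv : (D ^ R) ^ L = D⁻¹ := eq_inv_of_mul_eq_one_left hpow
  refine consecutiveProd_eq_of_semiconjBy (fun k => ?_) ?_ n
  · have hk := semiconjBy_pow_of_shift hconj k L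
    rwa [hinv, SemiconjBy.inv_symm_left_iff] at hk
  · have hinit : consecutiveProd (conjSeq d (D ^ R) e) 0 d = consecutiveProd e 0 d :=
      consecutiveProd_congr fun k hk => conjSeq_of_lt (by simpa using hk)
    have hblock := consecutiveProd_mul_mul_pow hconj 0 L
    rw [hinit, he, hinv, ← pow_mul, mul_comm u, pow_mul, hC, one_pow, mul_inv_eq_one] at hblock
    exact hblock

end ConjSeq

/-! ### Circular groups -/

section CircularGroup

variable {m ℓ : ℕ}

theorem circWord_eq_consecutiveProd (i : ZMod m) (p : ℕ) :
    circWord m i p = consecutiveProd FreeGroup.of i p := by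
  simp [circWord, consecutiveProd, ← List.map_eq_flatMap, Function.comp_def]

theorem circS_eq_consecutiveProd (i : ZMod m) (p : ℕ) :
    circS m ℓ i p = consecutiveProd (circGen m ℓ) i p := by
  simp [circS, consecutiveProd, ← List.map_eq_flatMap, Function.comp_def]

/-- The homomorphism from `G(m,ℓ)` given by the images `a i` of its generators. -/
def CircularGroup.lift {K : Type*} [Group K] (a : ZMod m → K)
    (ha : ∀ i, consecutiveProd a i ℓ = consecutiveProd a (i + 1) ℓ) : CircularGroup m ℓ →* K :=
  PresentedGroup.toGroup (f := a) <| by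
    rintro _ ⟨i, rfl⟩
    simp [circWord_eq_consecutiveProd, map_consecutiveProd, ha i]

theorem CircularGroup.lift_circGen {K : Type*} [Group K] (a : ZMod m → K)
    (ha : ∀ i, consecutiveProd a i ℓ = consecutiveProd a (i + 1) ℓ) (i : ZMod m) :
    lift a ha (circGen m ℓ i) = a i :=
  PresentedGroup.toGroup.of _

theorem CircularGroup.lift_circS {K : Type*} [Group K] (a : ZMod m → K)
    (ha : ∀ i, consecutiveProd a i ℓ = consecutiveProd a (i + 1) ℓ) (i : ZMod m) (p : ℕ) :
    lift a ha (circS m ℓ i p) = consecutiveProd a i p := by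
  simp only [circS_eq_consecutiveProd, map_consecutiveProd, lift_circGen]

/-- The length homomorphism, sending every generator to `1 : ℤ`. -/
def circLength (m ℓ : ℕ) : CircularGroup m ℓ →* Multiplicative ℤ :=
  CircularGroup.lift (fun _ => Multiplicative.ofAdd 1) fun _ => consecutiveProd_congr fun _ _ => rfl

theorem circLength_circS (i : ZMod m) (p : ℕ) :
    circLength m ℓ (circS m ℓ i p) = Multiplicative.ofAdd (p : ℤ) := by
  rw [circLength, CircularGroup.lift_circS]
  simp [consecutiveProd, ← ofAdd_nsmul]

theorem consecutiveProd_circGen_add_one (i : ZMod m) :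
    consecutiveProd (circGen m ℓ) (i + 1) ℓ = consecutiveProd (circGen m ℓ) i ℓ := by
  have h : PresentedGroup.mk (circRels m ℓ) (circWord m i ℓ * (circWord m (i + 1) ℓ)⁻¹) = 1 :=
    PresentedGroup.one_of_mem ⟨i, rfl⟩
  simp only [circWord_eq_consecutiveProd, map_mul, map_inv, map_consecutiveProd] at h
  exact (mul_inv_eq_one.1 h).symm

theorem consecutiveProd_circGen_eq_circDelta [NeZero m] (i : ZMod m) :
    consecutiveProd (circGen m ℓ) i ℓ = circDelta m ℓ := by
  obtain ⟨n, rfl⟩ := ZMod.natCast_zmod_surjective i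
  induction n with
  | zero => rw [Nat.cast_zero, circDelta, circS_eq_consecutiveProd]
  | succ n ih => rw [Nat.cast_succ, consecutiveProd_circGen_add_one, ih]

theorem semiconjBy_circDelta [NeZero m] (i : ZMod m) :
    SemiconjBy (circDelta m ℓ) (circGen m ℓ (i + ℓ)) (circGen m ℓ i) := by
  have h := consecutiveProd_mul_apply (circGen m ℓ) i ℓ
  rwa [consecutiveProd_circGen_eq_circDelta, consecutiveProd_circGen_eq_circDelta] at h

theorem semiconjBy_circDelta_pow [NeZero m] {d t : ℕ} (h : m ∣ d + ℓ * t) (i : ZMod m) :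
    SemiconjBy (circDelta m ℓ ^ t) (circGen m ℓ i) (circGen m ℓ (i + d)) := by
  have hi := semiconjBy_pow_of_shift (f := circGen m ℓ)
    (fun j => SemiconjBy.inv_symm_left_iff.2 (semiconjBy_circDelta j)) (i + (d : ZMod m)) t
  have hshift : (d : ZMod m) + (ℓ * t : ℕ) = 0 := by
    rwa [← Nat.cast_add, ZMod.natCast_eq_zero_iff]
  rwa [inv_pow, SemiconjBy.inv_symm_left_iff, add_assoc, hshift, add_zero] at hi

theorem mem_center_of_forall_commute_circGen {z : CircularGroup m ℓ}
    (hz : ∀ i, Commute z (circGen m ℓ i)) : z ∈ Subgroup.center (CircularGroup m ℓ) := by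
  have hle : Subgroup.closure (Set.range PresentedGroup.of) ≤ Subgroup.centralizer {z} :=
    (Subgroup.closure_le _).2 <| by
      rintro _ ⟨i, rfl⟩
      exact Subgroup.mem_centralizer_singleton_iff.2 (hz i).eq.symm
  rw [PresentedGroup.closure_range_of] at hle
  exact Subgroup.mem_center_iff.2 fun g => Subgroup.mem_centralizer_singleton_iff.1 (hle trivial)

/-- The element `ε = s(0,m)` of `G(m,ℓ)`. -/
def circEpsilon (m ℓ : ℕ) : CircularGroup m ℓ := circS m ℓ 0 m

theorem consecutiveProd_circGen_mul (t : ℕ) :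
    consecutiveProd (circGen m ℓ) 0 (m * t) = circEpsilon m ℓ ^ t := by
  have h := consecutiveProd_mul_mul_pow (f := circGen m ℓ) (E := 1) (d := m) (by simp) 0 t
  simpa [circEpsilon, circS_eq_consecutiveProd] using h

theorem circDelta_pow_mem_center [NeZero m] {t : ℕ} (h : m ∣ ℓ * t) :
    circDelta m ℓ ^ t ∈ Subgroup.center (CircularGroup m ℓ) :=
  mem_center_of_forall_commute_circGen fun i => by
    have hi := semiconjBy_circDelta_pow (d := 0) (by rwa [zero_add]) i
    rwa [Nat.cast_zero, add_zero] at hi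

theorem circEpsilon_pow_eq_circDelta_pow [NeZero m] {s t : ℕ} (h : m * s = ℓ * t) :
    circEpsilon m ℓ ^ s = circDelta m ℓ ^ t := by
  rw [← consecutiveProd_circGen_mul, h,
    consecutiveProd_mul_eq_pow consecutiveProd_circGen_eq_circDelta]

theorem consecutiveProd_circGen_mul_circDelta_pow [NeZero m] {d t u : ℕ}
    (h : d + ℓ * t = m * u) :
    consecutiveProd (circGen m ℓ) 0 d * circDelta m ℓ ^ t = circEpsilon m ℓ ^ u := by
  rw [← consecutiveProd_circGen_mul, ← h, consecutiveProd_add,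
    consecutiveProd_mul_eq_pow consecutiveProd_circGen_eq_circDelta]

theorem circGen_natCast_eq_conjSeq [NeZero m] {d t : ℕ} (h : m ∣ d + ℓ * t) (n : ℕ) :
    circGen m ℓ n = conjSeq d (circDelta m ℓ ^ t) (fun k : ℕ => circGen m ℓ k) n := by
  refine congrFun (eq_conjSeq_of_semiconjBy (f := fun k : ℕ => circGen m ℓ k) fun k => ?_) n
  rw [Nat.cast_add]
  exact semiconjBy_circDelta_pow h k

theorem circLength_circDelta_zpow (j : ℤ) :
    circLength m ℓ (circDelta m ℓ ^ j) = Multiplicative.ofAdd (j * ℓ) := by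
  rw [map_zpow, circDelta, circLength_circS, ← ofAdd_zsmul, smul_eq_mul]

theorem circLength_circEpsilon_zpow (j : ℤ) :
    circLength m ℓ (circEpsilon m ℓ ^ j) = Multiplicative.ofAdd (j * m) := by
  rw [map_zpow, circEpsilon, circLength_circS, ← ofAdd_zsmul, smul_eq_mul]

end CircularGroup

section BaseGroup

/-- The indices of the free factors of `CircularBase`. -/
inductive BaseFactor
  | delta
  | epsilon
  | free (k : ℕ)

/-- The orders of the free factors of `CircularBase`, where `0` stands for an infinite factor. -/
def BaseFactor.order (M L : ℕ) : BaseFactor → ℕ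
  | delta => M
  | epsilon => L
  | free _ => 0

instance : Nonempty BaseFactor := ⟨.delta⟩

/-- The free product `ℤ/M * ℤ/L * ℤ * ℤ * ⋯`, of which `G(dM,dL) ⧸ ⟨Δ ^ M⟩` is a retract for coprime
`M` and `L`. The quotient itself has only `d - 1` infinite factors; allowing infinitely many makes
the group independent of `d`. -/
abbrev CircularBase (M L : ℕ) : Type :=
  CyclicFreeProduct (BaseFactor.order M L)

variable {d M L R u : ℕ}

theorem CircularBase.exists_isConj_gen_zpow {y : CircularBase M L} {n : ℤ} (hn : n ≠ 0)
    (hy : y ^ n = 1) : ∃ j : ℤ, IsConj (.gen _ .delta ^ j) y ∨ IsConj (.gen _ .epsilon ^ j) y := by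
  obtain rfl | hy_ne := eq_or_ne y 1
  · exact ⟨0, .inl (by rw [zpow_zero])⟩
  obtain ⟨_ | _ | k, j, hi, hj⟩ := CyclicFreeProduct.exists_isConj_gen_zpow
    (Int.natAbs_ne_zero.2 hn) (pow_natAbs_eq_one.2 hy) hy_ne
  · exact ⟨j, .inl hj⟩
  · exact ⟨j, .inr hj⟩
  · exact absurd rfl hi

/-- The elements of `CircularBase M L` that correspond to the first `d` generators of `G(dM,dL)`:
all but the first are free, and the first is chosen so that their product is `ε ^ u * (Δ ^ R)⁻¹`. -/
def baseSeq (d M L R u : ℕ) : ℕ → CircularBase M L :=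
  let a (k : ℕ) : CircularBase M L := .gen _ (.free k)
  Function.update a 0
    (.gen _ .epsilon ^ u * (.gen _ .delta ^ R)⁻¹ * (consecutiveProd a 1 (d - 1))⁻¹)

theorem consecutiveProd_baseSeq (hd : 0 < d) :
    consecutiveProd (baseSeq d M L R u) 0 d * .gen _ .delta ^ R = .gen _ .epsilon ^ u := by
  rw [baseSeq, consecutiveProd_update_zero _ _ hd, inv_mul_cancel_right]

theorem exists_hom_baseSeq {K : Type*} [Group K] {C D : K} {a : ℕ → K} (hd : 0 < d)
    (hD : D ^ M = 1) (hC : C ^ L = 1) (ha : consecutiveProd a 0 d * D ^ R = C ^ u) :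
    ∃ ψ : CircularBase M L →* K, ψ (.gen _ .delta) = D ∧ ψ (.gen _ .epsilon) = C ∧
      ∀ k, ψ (baseSeq d M L R u k) = a k := by
  obtain ⟨ψ, hψ⟩ := CyclicFreeProduct.exists_hom_gen (n := BaseFactor.order M L)
    (fun | .delta => D | .epsilon => C | .free k => a k)
    (by rintro (_ | _ | k); exacts [hD, hC, pow_zero _])
  refine ⟨ψ, hψ .delta, hψ .epsilon, fun k => ?_⟩
  obtain rfl | hk := eq_or_ne k 0
  · have hsplit : a 0 * consecutiveProd a 1 (d - 1) = C ^ u * (D ^ R)⁻¹ := by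
      rw [← ha, mul_inv_cancel_right, ← Nat.add_sub_of_le hd, consecutiveProd_add,
        consecutiveProd_one]
      simp
    simp only [baseSeq, Function.update_self, map_mul, map_inv, map_pow, map_consecutiveProd, hψ]
    rw [← hsplit, mul_inv_cancel_right]
  · rw [baseSeq, Function.update_of_ne hk, hψ]

theorem CircularGroup.exists_hom_conjSeq {K : Type*} [Group K] [NeZero (d * M)] {C D : K}
    {e : ℕ → K} (h : R * L + 1 = u * M) (hD : D ^ M = 1) (hC : C ^ L = 1)
    (he : consecutiveProd e 0 d * D ^ R = C ^ u) :
    ∃ φ : CircularGroup (d * M) (d * L) →* K, φ (circDelta (d * M) (d * L)) = D ∧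
      ∀ n : ℕ, φ (circGen (d * M) (d * L) n) = conjSeq d (D ^ R) e n := by
  have hd : 0 < d := Nat.pos_of_mul_pos_right (NeZero.pos (d * M))
  have hperiod : Function.Periodic (conjSeq d (D ^ R) e) (d * M) :=
    conjSeq_periodic hd (by rw [← pow_mul, mul_comm, pow_mul, hD, one_pow])
  let a (i : ZMod (d * M)) : K := conjSeq d (D ^ R) e i.val
  have a_natCast (n : ℕ) : a n = conjSeq d (D ^ R) e n := by
    simp only [a, ZMod.val_natCast, hperiod.map_mod_nat]
  have prod_a (i : ZMod (d * M)) : consecutiveProd a i (d * L) = D := by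
    obtain ⟨n, rfl⟩ := ZMod.natCast_zmod_surjective i
    rw [← consecutiveProd_conjSeq hd h hD hC he n]
    exact consecutiveProd_congr fun k _ => by rw [← Nat.cast_add, a_natCast, Nat.cast_id]
  refine ⟨lift a fun i => (prod_a i).trans (prod_a (i + 1)).symm, ?_, fun n => ?_⟩
  · rw [circDelta, lift_circS, prod_a]
  · rw [lift_circGen, a_natCast]

local notation "𝒢" => CircularGroup (d * M) (d * L)
local notation "Δ" => circDelta (d * M) (d * L)
local notation "ε" => circEpsilon (d * M) (d * L)

theorem exists_hom_circularBase [NeZero (d * M)] (h : R * L + 1 = u * M)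
    [(Subgroup.zpowers (Δ ^ M)).Normal] :
    ∃ (φ : 𝒢 →* CircularBase M L) (ψ : CircularBase M L →* 𝒢 ⧸ Subgroup.zpowers (Δ ^ M)),
      φ Δ = .gen _ .delta ∧ ψ (.gen _ .delta) = Δ ∧ ψ (.gen _ .epsilon) = ε ∧
        ∀ x, ψ (φ x) = x := by
  have hd : 0 < d := Nat.pos_of_mul_pos_right (NeZero.pos (d * M))
  have hu : d + d * L * R = d * M * u := by linear_combination d * h
  let π := QuotientGroup.mk' (Subgroup.zpowers (Δ ^ M))
  have hπΔ : π Δ ^ M = 1 := (QuotientGroup.eq_one_iff _).2 (Subgroup.mem_zpowers _)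
  have hπε : π ε ^ L = 1 := by
    rw [← map_pow, circEpsilon_pow_eq_circDelta_pow (mul_right_comm d M L), map_pow, hπΔ]
  have hπa : consecutiveProd (fun k : ℕ => π (circGen _ _ k)) 0 d * π Δ ^ R = π ε ^ u := by
    rw [← map_consecutiveProd, consecutiveProd_comp_natCast, ← map_pow, ← map_mul,
      consecutiveProd_circGen_mul_circDelta_pow hu, map_pow]
  obtain ⟨ψ, hψΔ, hψε, hψ⟩ := exists_hom_baseSeq hd hπΔ hπε hπa
  obtain ⟨φ, hφΔ, hφ⟩ := CircularGroup.exists_hom_conjSeq h (CyclicFreeProduct.gen_pow_order _)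
    (CyclicFreeProduct.gen_pow_order _) (consecutiveProd_baseSeq hd)
  have hψφ : ψ.comp φ = π := PresentedGroup.ext fun i => by
    obtain ⟨n, rfl⟩ := ZMod.natCast_zmod_surjective i
    calc ψ (φ (circGen _ _ n))
      _ = conjSeq d (π (Δ ^ R)) (fun k => π (circGen _ _ k)) n := by
        simp only [hφ, map_conjSeq, map_pow, hψΔ, hψ]
      _ = π (circGen _ _ n) := by
        rw [circGen_natCast_eq_conjSeq (Dvd.intro u hu.symm), map_conjSeq]
  exact ⟨φ, ψ, hφΔ, hψΔ, hψε, DFunLike.congr_fun hψφ⟩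

end BaseGroup

section Periodic

/-- A periodic element of `G(m,ℓ)`: some nontrivial power of it is a power of `Δ`. -/
def IsCircPeriodic {m ℓ : ℕ} (x : CircularGroup m ℓ) : Prop :=
  ∃ p : ℤ, p ≠ 0 ∧ ∃ q : ℤ, x ^ p = circDelta m ℓ ^ q

variable {m ℓ : ℕ} [NeZero m]

theorem IsCircPeriodic.exists_isConj_zpow {x : CircularGroup m ℓ} (hx : IsCircPeriodic x) :
    ∃ j : ℤ, IsConj (circDelta m ℓ ^ j) x ∨ IsConj (circEpsilon m ℓ ^ j) x := by
  obtain ⟨p, hp, q, hx⟩ := hx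
  obtain ⟨d, M, L, hcop, rfl, rfl⟩ := exists_eq_mul_coprime m ℓ
  have hM : M ≠ 0 := right_ne_zero_of_mul (NeZero.ne (d * M))
  obtain ⟨R, u, h⟩ := exists_mul_add_one_eq_mul_of_coprime hcop hM
  set Δ := circDelta (d * M) (d * L)
  set ε := circEpsilon (d * M) (d * L)
  have hεL : ε ^ L = Δ ^ M := circEpsilon_pow_eq_circDelta_pow (mul_right_comm d M L)
  have : (Subgroup.zpowers (Δ ^ M)).Normal :=
    normal_of_le_center (Subgroup.zpowers_le.2 (circDelta_pow_mem_center ⟨L, mul_right_comm d L M⟩))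
  obtain ⟨φ, ψ, hφΔ, hψΔ, hψε, hψφ⟩ := exists_hom_circularBase (d := d) h
  have lift_isConj {w : CircularGroup (d * M) (d * L)} {b : CircularBase M L} (hw : ψ b = w)
      (hb : IsConj b (φ x)) : ∃ s : ℤ, IsConj (w * (Δ ^ M) ^ s) x := by
    have hwx := ψ.map_isConj hb
    rw [hw, hψφ] at hwx
    obtain ⟨_, ⟨s, rfl⟩, hs⟩ := exists_mem_isConj_mul_of_isConj_coe hwx
    exact ⟨s, hs⟩
  have hφx : φ x ^ (p * M) = 1 := by
    have hφΔM : φ Δ ^ M = 1 := hφΔ ▸ CyclicFreeProduct.gen_pow_order _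
    rw [zpow_mul, ← map_zpow, hx, map_zpow, zpow_comm, zpow_natCast, hφΔM, one_zpow]
  obtain ⟨j, hj | hj⟩ :=
    CircularBase.exists_isConj_gen_zpow (mul_ne_zero hp (Nat.cast_ne_zero.2 hM)) hφx
  · obtain ⟨s, hs⟩ := lift_isConj (w := Δ ^ j) (by rw [map_zpow, hψΔ, QuotientGroup.mk_zpow]) hj
    exact ⟨j + M * s, .inl (by rwa [zpow_add, zpow_mul, zpow_natCast])⟩
  · obtain ⟨s, hs⟩ := lift_isConj (w := ε ^ j) (by rw [map_zpow, hψε, QuotientGroup.mk_zpow]) hj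
    exact ⟨j + L * s, .inr (by rwa [zpow_add, zpow_mul, zpow_natCast, hεL])⟩

variable [NeZero ℓ]

theorem circDelta_zpow_eq_circEpsilon_zpow {i j : ℤ}
    (hij : circLength m ℓ (circDelta m ℓ ^ i) = circLength m ℓ (circEpsilon m ℓ ^ j)) :
    circDelta m ℓ ^ i = circEpsilon m ℓ ^ j := by
  obtain ⟨d, M, L, hcop, rfl, rfl⟩ := exists_eq_mul_coprime m ℓ
  obtain ⟨hd, hL⟩ := mul_ne_zero_iff.1 (NeZero.ne (d * L))
  rw [circLength_circDelta_zpow, circLength_circEpsilon_zpow,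
    Multiplicative.ofAdd.apply_eq_iff_eq] at hij
  push_cast at hij
  have hiL : i * L = j * M :=
    mul_left_cancel₀ (Nat.cast_ne_zero.2 hd) (by linear_combination hij)
  obtain ⟨s, rfl⟩ : (L : ℤ) ∣ j :=
    (Nat.isCoprime_iff_coprime.2 hcop).symm.dvd_of_dvd_mul_right (hiL ▸ dvd_mul_left _ _)
  obtain rfl : i = M * s :=
    mul_right_cancel₀ (Nat.cast_ne_zero.2 hL) (by linear_combination hiL)
  rw [zpow_mul, zpow_mul, zpow_natCast, zpow_natCast,
    circEpsilon_pow_eq_circDelta_pow (mul_right_comm d M L)]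

theorem IsCircPeriodic.isConj_of_circLength_eq {x y : CircularGroup m ℓ} (hx : IsCircPeriodic x)
    (hy : IsCircPeriodic y) (hxy : circLength m ℓ x = circLength m ℓ y) : IsConj x y := by
  have hΔ : circLength m ℓ (circDelta m ℓ) ≠ 1 := by
    simpa [circDelta, circLength_circS] using NeZero.ne ℓ
  have hε : circLength m ℓ (circEpsilon m ℓ) ≠ 1 := by
    simpa [circEpsilon, circLength_circS] using NeZero.ne m
  have length_eq {v w} (hv : IsConj v x) (hw : IsConj w y) :
      circLength m ℓ v = circLength m ℓ w := by
    rw [isConj_iff_eq.1 ((circLength m ℓ).map_isConj hv), hxy,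
      isConj_iff_eq.1 ((circLength m ℓ).map_isConj hw)]
  suffices h : ∃ w, IsConj w x ∧ IsConj w y by
    obtain ⟨w, hwx, hwy⟩ := h
    exact hwx.symm.trans hwy
  obtain ⟨i, hi | hi⟩ := hx.exists_isConj_zpow <;> obtain ⟨j, hj | hj⟩ := hy.exists_isConj_zpow
  · exact ⟨_, hi, zpow_eq_zpow_of_map_eq _ hΔ (length_eq hi hj) ▸ hj⟩
  · exact ⟨_, hi, circDelta_zpow_eq_circEpsilon_zpow (length_eq hi hj) ▸ hj⟩
  · exact ⟨_, circDelta_zpow_eq_circEpsilon_zpow (length_eq hi hj).symm ▸ hi, hj⟩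
  · exact ⟨_, hi, zpow_eq_zpow_of_map_eq _ hε (length_eq hi hj) ▸ hj⟩

end Periodic

/-- Any two `(p,q)`-periodic elements of `G(m,ℓ)` are conjugate. -/
theorem periodic_are_conjugate_circular (m ℓ : ℕ) (hm : 0 < m) (hℓ : 0 < ℓ)
    (p : ℤ) (hp : p ≠ 0) (q : ℤ) (x y : CircularGroup m ℓ)
    (hx : x ^ p = (circDelta m ℓ) ^ q) (hy : y ^ p = (circDelta m ℓ) ^ q) :
    IsConj x y := by
  have : NeZero m := ⟨hm.ne'⟩
  have : NeZero ℓ := ⟨hℓ.ne'⟩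
  have length_eq : circLength m ℓ x = circLength m ℓ y :=
    zpow_left_injective hp (by simp only [← map_zpow, hx, hy])
  exact IsCircPeriodic.isConj_of_circLength_eq ⟨p, hp, q, hx⟩ ⟨p, hp, q, hy⟩ length_eq
end
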